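/- arXiv:1912.06897 — 2 statements merged into one kernel-verified Lean document; each statement's English description precedes it below -/
import Mathlib

section
/- Let A be a finite invertible Mealy automaton over X. The group G_A is finite if and only if there is a constant C such that every G_A-orbit O(v) of a finite word v ∈ X^* has at most C elements (i.e., the orbits of the action of G_A on X^* are uniformly bounded). -/
/-- A Mealy automaton over alphabet `X` with state set `S`:
the transition-output function sends `(s, x)` to `(output letter, next state)`. -/
structure Mealy (S X : Type*) where
  step : S → X → X × S

namespace Mealy

variable {S X : Type*}

/-- The section `s|_v`: the state reached after processing the word `v` from state `s`. -/
def sec (A : Mealy S X) (s : S) : List X → S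
  | [] => s
  | x :: v => A.sec (A.step s x).2 v

/-- The action of a state on finite words (lists of letters, read left to right). -/
def act (A : Mealy S X) (s : S) : List X → List X
  | [] => []
  | x :: v => (A.step s x).1 :: A.act (A.step s x).2 v

/-- A state is trivial if it acts on `X^*` as the identity. -/
def IsTrivialState (A : Mealy S X) (s : S) : Prop := ∀ v : List X, A.act s v = v

/-- An automaton is invertible if every state acts on the letters by a permutation. -/
def Invertible (A : Mealy S X) : Prop :=
  ∀ s : S, Function.Bijective fun x : X => (A.step s x).1

/-- The automaton group `G_A`: the subgroup of permutations of `X^*` generated by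
the permutations defined by the states of `A`. -/
def autGroup (A : Mealy S X) : Subgroup (Equiv.Perm (List X)) :=
  Subgroup.closure { f : Equiv.Perm (List X) | ∃ s : S, ∀ v : List X, f v = A.act s v }

/-- A left-infinite sequence `…x₂x₁` is encoded as `p : ℕ → X` with `p 0 = x₁`, `p 1 = x₂`, ….
It is post-critical if it is the sequence of input labels or of output labels of a
left-infinite directed path in `A` ending at a non-trivial state. -/
def IsPostCritical (A : Mealy S X) (p : ℕ → X) : Prop :=
  ∃ (σ : ℕ → S) (inp out : ℕ → X),
    (∀ n, A.step (σ (n + 1)) (inp n) = (out n, σ n)) ∧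
      ¬A.IsTrivialState (σ 0) ∧ (p = inp ∨ p = out)

/-- The post-critical set of `A`. -/
def PostCriticalSet (A : Mealy S X) : Set (ℕ → X) := { p | A.IsPostCritical p }

/-- An automaton is bounded if its post-critical set is finite. -/
def Bounded (A : Mealy S X) : Prop := A.PostCriticalSet.Finite

/-- The length-`n` suffix (as a finite word, read left to right) of a left-infinite
sequence `…x₂x₁` encoded as `p : ℕ → X`: the word `xₙ…x₂x₁`. -/
def lsuffix (p : ℕ → X) (n : ℕ) : List X := (List.range n).reverse.map p

/-- A finite word is post-critical if it is a suffix of some post-critical sequence. -/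
def IsPostCriticalWord (A : Mealy S X) (v : List X) : Prop :=
  ∃ p : ℕ → X, A.IsPostCritical p ∧ v = lsuffix p v.length

/-- The base relation for `e`-equivalence: `v ≈ u` if some state `s` satisfies
`s|_v` trivial and `s(v) = u`, or `s|_u` trivial and `s(u) = v`. -/
def ERel (A : Mealy S X) (v u : List X) : Prop :=
  ∃ s : S, (A.IsTrivialState (A.sec s v) ∧ A.act s v = u) ∨
    (A.IsTrivialState (A.sec s u) ∧ A.act s u = v)

/-- `e`-equivalence: the equivalence relation generated by `≈`. -/
def EEquiv (A : Mealy S X) : List X → List X → Prop := Relation.EqvGen A.ERel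

/-- The `e`-orbit of a word. -/
def eOrbit (A : Mealy S X) (v : List X) : Set (List X) := { u | A.EEquiv v u }

/-- The orbit of a finite word under the automaton group. -/
def orbit (A : Mealy S X) (v : List X) : Set (List X) := { u | ∃ g ∈ A.autGroup, g v = u }

/-- Reachability by a directed path in the automaton. -/
def Reaches (A : Mealy S X) : S → S → Prop :=
  Relation.ReflTransGen fun a b => ∃ x : X, (A.step a x).2 = b

/-- The states of the circuit part `C(A)`: states reachable by a directed path
from some directed cycle of `A`. -/
def circuitStates (A : Mealy S X) : Set S :=
  { s | ∃ t : S, (∃ x : X, A.Reaches (A.step t x).2 t) ∧ A.Reaches t s }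

/-- The circuit part `C(A)` as a subautomaton. -/
def circuitPart (A : Mealy S X) : Mealy A.circuitStates X where
  step s x :=
    ((A.step s.1 x).1,
      ⟨(A.step s.1 x).2, by
        obtain ⟨t, hc, hr⟩ := s.2
        exact ⟨t, hc, hr.tail ⟨x, rfl⟩⟩⟩)

/-- The subautomaton induced on a subset of states closed under transitions. -/
def subautomaton (A : Mealy S X) (T : Set S)
    (hT : ∀ s ∈ T, ∀ x : X, (A.step s x).2 ∈ T) : Mealy T X where
  step s x := ((A.step s.1 x).1, ⟨(A.step s.1 x).2, hT s.1 s.2 x⟩)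

/-- The extension of a length- and prefix-preserving map on finite words to
right-infinite sequences (letter by letter). -/
def extOmega (f : List X → List X) (w : ℕ → X) : ℕ → X :=
  fun n => (f ((List.range (n + 1)).map w)).getD n (w n)

/-- The orbit of a right-infinite sequence under the automaton group. -/
def orbitOmega (A : Mealy S X) (w : ℕ → X) : Set (ℕ → X) :=
  { w' | ∃ g ∈ A.autGroup, w' = extOmega (⇑(g : Equiv.Perm (List X))) w }

/-- The group `G_A` is level-transitive if it acts transitively on each level `X^n`. -/
def LevelTransitive (A : Mealy S X) : Prop :=
  ∀ v u : List X, v.length = u.length → ∃ g ∈ A.autGroup, g v = u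

end Mealy

/-- The run of a deterministic finite-state machine on a right-infinite input:
`dfaRun δ q₀ w n` is the state after reading the first `n` letters. -/
def dfaRun {Q X : Type*} (δ : Q → X → Q) (q₀ : Q) (w : ℕ → X) : ℕ → Q
  | 0 => q₀
  | n + 1 => δ (dfaRun δ q₀ w n) (w n)

/-- A concrete encoding of an invertible Mealy automaton (with state set `Fin n`
over alphabet `Fin k`) as a natural number. -/
def encodeAut (n k : ℕ) (step : Fin n → Fin k → Fin k × Fin n) : ℕ :=
  Nat.pair n (Nat.pair k (Encodable.encode
    ((List.finRange n).flatMap fun s =>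
      (List.finRange k).map fun x =>
        Nat.pair ((step s x).1 : ℕ) ((step s x).2 : ℕ))))

/-! An orbit with at most `C` points embeds into `Fin C`, so the action on it is a homomorphism to
`Equiv.Perm (Fin C)`. A finitely generated group has only finitely many such homomorphisms, because
each is determined by its values on the generators. If every orbit has at most `C` points and the
action is faithful, these homomorphisms jointly separate the elements of the group, which therefore
embeds into a finite product of copies of `Equiv.Perm (Fin C)`. -/

theorem finite_monoidHom_of_fg (M N : Type*) [Monoid M] [Monoid.FG M] [Monoid N] [Finite N] :
    Finite (M →* N) := by
  obtain ⟨T, hT, hfin⟩ := Monoid.fg_iff.mp ‹Monoid.FG M›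
  have : Finite T := hfin
  refine .of_injective (fun (φ : M →* N) (t : T) => φ t) fun φ ψ h => ?_
  exact MonoidHom.eq_of_eqOn_denseM hT fun t ht => congrFun h ⟨t, ht⟩

theorem nonempty_embedding_fin_of_encard_le {α : Type*} {s : Set α} {n : ℕ}
    (h : s.encard ≤ n) : Nonempty (s ↪ Fin n) := by
  obtain ⟨hfin, hcard⟩ := Set.encard_le_coe_iff_finite_ncard_le.mp h
  have := hfin.to_subtype
  exact ⟨(Finite.equivFin s).toEmbedding.trans (Fin.castLEEmb hcard)⟩

section OrbitBounds

variable {G α : Type*}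

theorem encard_orbit_le_card [SMul G α] (a : α) :
    (MulAction.orbit G a).encard ≤ ENat.card G := by
  rw [MulAction.orbit, ← Set.image_univ, ← Set.encard_univ]
  exact Set.encard_image_le _ _

variable [Group G] [MulAction G α]

/-- The action of `G` on the orbit of `a`, transported along an embedding `e` of the orbit into `β`
and extended by fixing every point outside the range of `e`. -/
noncomputable def orbitPermHom {β : Type*} {a : α} (e : MulAction.orbit G a ↪ β) :
    G →* Equiv.Perm β :=
  (Equiv.Perm.viaEmbeddingHom e).comp (MulAction.toPermHom G (MulAction.orbit G a))

theorem orbitPermHom_apply {β : Type*} {a : α} (e : MulAction.orbit G a ↪ β) (g : G)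
    (x : MulAction.orbit G a) : orbitPermHom e g (e x) = e (g • x) :=
  Equiv.Perm.viaEmbedding_apply (MulAction.toPerm g) e x

theorem smul_eq_smul_of_orbitPermHom_eq {β : Type*} {a : α} (e : MulAction.orbit G a ↪ β)
    {g h : G} (hgh : orbitPermHom e g = orbitPermHom e h) : g • a = h • a := by
  let x : MulAction.orbit G a := ⟨a, MulAction.mem_orbit_self a⟩
  have hx : g • x = h • x := e.injective <| by
    rw [← orbitPermHom_apply, hgh, orbitPermHom_apply]
  exact congrArg Subtype.val hx

variable [Group.FG G] [FaithfulSMul G α]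

theorem finite_of_nonempty_orbit_embedding (β : Type*) [Finite β]
    (hβ : ∀ a : α, Nonempty (MulAction.orbit G a ↪ β)) : Finite G := by
  have : Finite (G →* Equiv.Perm β) := finite_monoidHom_of_fg G (Equiv.Perm β)
  refine .of_injective (fun g (φ : G →* Equiv.Perm β) => φ g) fun g h hgh => ?_
  refine FaithfulSMul.eq_of_smul_eq_smul fun a : α => ?_
  obtain ⟨e⟩ := hβ a
  exact smul_eq_smul_of_orbitPermHom_eq e (congrFun hgh (orbitPermHom e))

variable (G α) in
theorem finite_iff_exists_encard_orbit_le :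
    Finite G ↔ ∃ C : ℕ, ∀ a : α, (MulAction.orbit G a).encard ≤ C := by
  constructor
  · intro hG
    exact ⟨Nat.card G, fun a => (encard_orbit_le_card a).trans_eq (ENat.card_eq_coe_natCard G)⟩
  · rintro ⟨C, hC⟩
    exact finite_of_nonempty_orbit_embedding (Fin C) fun a =>
      nonempty_embedding_fin_of_encard_le (hC a)

end OrbitBounds

namespace Mealy

variable {S X : Type*}

theorem orbit_eq_mulAction_orbit (A : Mealy S X) (v : List X) :
    A.orbit v = MulAction.orbit A.autGroup v := by
  ext u
  simp only [orbit, Set.mem_ofPred_eq, MulAction.mem_orbit_iff, Subtype.exists,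
    Subgroup.mk_smul, Equiv.Perm.smul_def, exists_prop]

theorem fg_autGroup [Finite S] (A : Mealy S X) : Group.FG A.autGroup := by
  have hfin : {f : Equiv.Perm (List X) | ∃ s, ∀ v, f v = A.act s v}.Finite := by
    refine ((Set.finite_range A.act).preimage DFunLike.coe_injective.injOn).subset ?_
    rintro f ⟨s, hs⟩
    exact ⟨s, (funext hs).symm⟩
  exact (Group.fg_iff_subgroup_fg _).mpr ((Subgroup.fg_iff _).mpr ⟨_, rfl, hfin⟩)

end Mealy

theorem finite_iff_orbits_uniformly_bounded_general {S X : Type*} [Finite S] (A : Mealy S X) :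
    Finite A.autGroup ↔
      ∃ C : ℕ, ∀ v : List X, (A.orbit v).Finite ∧ (A.orbit v).ncard ≤ C := by
  have := A.fg_autGroup
  simp_rw [A.orbit_eq_mulAction_orbit, ← Set.encard_le_coe_iff_finite_ncard_le]
  exact finite_iff_exists_encard_orbit_le A.autGroup (List X)

/-- `G_A` is finite iff the orbits of its action on `X^*` are
uniformly bounded. -/
theorem finite_iff_orbits_uniformly_bounded {S X : Type*} [Fintype S] [Fintype X]
    (hX : 2 ≤ Fintype.card X) (A : Mealy S X) (hInv : A.Invertible) :
    Finite A.autGroup ↔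
      ∃ C : ℕ, ∀ v : List X, (A.orbit v).Finite ∧ (A.orbit v).ncard ≤ C :=
  finite_iff_orbits_uniformly_bounded_general A
end

section
/- Let A be a bounded invertible Mealy automaton over X with A = C(A), and let v be a finite word such that no word in the e-orbit O^e(v) is post-critical. Then for every finite word u, O^e(vu) = O^e(v)u = {wu : w ∈ O^e(v)}. -/
/-!
If every state has an incoming edge, the path of `s` along a word `w` extends to a left-infinite
path ending at `s|_w`. Hence `s|_w` can be non-trivial only if both `w` and `s(w)` are
post-critical. When no word of `O^e(v)` is post-critical, a state that carries `wu` to some word or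
some word to `wu`, with `w ∈ O^e(v)`, is therefore already trivial once `w` has been read or
written, so it leaves the suffix `u` unchanged.
-/

namespace Mealy

variable {S X : Type*} {A : Mealy S X}

section Action

theorem length_act (A : Mealy S X) (s : S) (v : List X) : (A.act s v).length = v.length := by
  induction v generalizing s with
  | nil => rfl
  | cons x v ih => simp only [act, List.length_cons, ih]

theorem sec_append (A : Mealy S X) (s : S) (v u : List X) :
    A.sec s (v ++ u) = A.sec (A.sec s v) u := by
  induction v generalizing s with
  | nil => rfl
  | cons x v ih => exact ih _

theorem act_append (A : Mealy S X) (s : S) (v u : List X) :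
    A.act s (v ++ u) = A.act s v ++ A.act (A.sec s v) u := by
  induction v generalizing s with
  | nil => rfl
  | cons x v ih => simp only [List.cons_append, act, sec, ih]

theorem act_eq_append_iff {s : S} {b w u : List X} :
    A.act s b = w ++ u ↔
      ∃ w' u', b = w' ++ u' ∧ A.act s w' = w ∧ A.act (A.sec s w') u' = u := by
  constructor
  · intro h
    have hlen : w.length ≤ b.length := by
      rw [← A.length_act s b, h, List.length_append]
      exact Nat.le_add_right _ _
    rw [← List.take_append_drop w.length b, act_append] at h
    have hsplit := List.append_inj h (by rw [length_act, List.length_take_of_le hlen])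
    exact ⟨_, _, (List.take_append_drop w.length b).symm, hsplit⟩
  · rintro ⟨w', u', rfl, rfl, rfl⟩
    exact A.act_append s w' u'

theorem IsTrivialState.sec {s : S} (h : A.IsTrivialState s) (v : List X) :
    A.IsTrivialState (A.sec s v) := fun u =>
  List.append_cancel_left <| calc
    v ++ A.act (A.sec s v) u = A.act s (v ++ u) := by rw [act_append, h v]
    _ = v ++ u := h _

theorem IsTrivialState.act_append {s : S} {v : List X} (h : A.IsTrivialState (A.sec s v))
    (u : List X) : A.act s (v ++ u) = A.act s v ++ u := by
  rw [Mealy.act_append, h u]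

end Action

section EOrbit

variable {a b : List X}

theorem eRel_act {s : S} (h : A.IsTrivialState (A.sec s a)) : A.ERel a (A.act s a) :=
  ⟨s, Or.inl ⟨h, rfl⟩⟩

theorem ERel.symm (h : A.ERel a b) : A.ERel b a :=
  h.imp fun _ => Or.symm

instance : Std.Symm A.ERel := ⟨fun _ _ => ERel.symm⟩

theorem eEquiv_eq_reflTransGen (A : Mealy S X) : A.EEquiv = Relation.ReflTransGen A.ERel :=
  Relation.EqvGen.eqvGen_eq_reflTransGen _

theorem ERel.append (h : A.ERel a b) (u : List X) : A.ERel (a ++ u) (b ++ u) := by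
  have append_act {c : List X} {s : S} (hs : A.IsTrivialState (A.sec s c)) :
      A.ERel (c ++ u) (A.act s c ++ u) := by
    rw [← hs.act_append]
    exact eRel_act (A.sec_append s c u ▸ hs.sec u)
  obtain ⟨s, ⟨hs, rfl⟩ | ⟨hs, rfl⟩⟩ := h
  · exact append_act hs
  · exact (append_act hs).symm

theorem EEquiv.append (h : A.EEquiv a b) (u : List X) : A.EEquiv (a ++ u) (b ++ u) := by
  rw [eEquiv_eq_reflTransGen] at h ⊢
  exact h.lift (· ++ u) fun _ _ hab => hab.append u

end EOrbit

section LeftInfinitePaths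

/-- The left-infinite sequence `…p₂p₁x` obtained by appending the letter `x` to `…p₂p₁`; as in
`IsPostCritical`, the last letter of a sequence has index `0`. -/
def snoc {α : Type*} (p : ℕ → α) (x : α) : ℕ → α
  | 0 => x
  | n + 1 => p n

theorem length_lsuffix (p : ℕ → X) (n : ℕ) : (lsuffix p n).length = n := by
  simp only [lsuffix, List.length_map, List.length_reverse, List.length_range]

theorem lsuffix_snoc (p : ℕ → X) (x : X) (n : ℕ) :
    lsuffix (snoc p x) (n + 1) = lsuffix p n ++ [x] := by
  simp [lsuffix, List.range_succ_eq_map, Function.comp_def, snoc]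

/-- The states `…σ₁σ₀` form a left-infinite directed path ending at `σ 0`, along which the edge
from `σ (n + 1)` to `σ n` has input label `inp n` and output label `out n`. -/
def IsLeftPath (A : Mealy S X) (σ : ℕ → S) (inp out : ℕ → X) : Prop :=
  ∀ n, A.step (σ (n + 1)) (inp n) = (out n, σ n)

variable {σ : ℕ → S} {inp out : ℕ → X}

theorem exists_isLeftPath (hpred : ∀ s, ∃ t x, (A.step t x).2 = s) (s : S) :
    ∃ σ inp out, A.IsLeftPath σ inp out ∧ σ 0 = s := by
  choose pred letter hstep using hpred
  refine ⟨fun n => pred^[n] s, fun n => letter (pred^[n] s), _, fun n => Prod.ext rfl ?_, rfl⟩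
  simp only [Function.iterate_succ_apply', hstep]

theorem IsLeftPath.snoc (h : A.IsLeftPath σ inp out) (x : X) :
    A.IsLeftPath (snoc σ (A.step (σ 0) x).2) (snoc inp x) (snoc out (A.step (σ 0) x).1)
  | 0 => rfl
  | n + 1 => h n

theorem IsLeftPath.exists_extend (h : A.IsLeftPath σ inp out) (w : List X) :
    ∃ σ' inp' out', A.IsLeftPath σ' inp' out' ∧ σ' 0 = A.sec (σ 0) w ∧
      lsuffix inp' w.length = w ∧ lsuffix out' w.length = A.act (σ 0) w := by
  induction w using List.reverseRecOn with
  | nil => exact ⟨σ, inp, out, h, rfl, rfl, rfl⟩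
  | append_singleton w x ih =>
    obtain ⟨σ', inp', out', h', hend, hinp, hout⟩ := ih
    refine ⟨_, _, _, h'.snoc x, ?_, ?_, ?_⟩
    · rw [sec_append, ← hend]
      rfl
    · rw [List.length_append, List.length_singleton, lsuffix_snoc, hinp]
    · rw [List.length_append, List.length_singleton, lsuffix_snoc, hout, act_append, ← hend]
      rfl

end LeftInfinitePaths

section PostCritical

theorem exists_step_eq_of_mem_circuitStates {s : S} (hs : s ∈ A.circuitStates) :
    ∃ t x, (A.step t x).2 = s := by
  obtain ⟨c, ⟨x, hcycle⟩, hreach⟩ := hs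
  have hreach' : A.Reaches (A.step c x).2 s := hcycle.trans hreach
  obtain rfl | ⟨t, -, y, hy⟩ := hreach'.cases_tail
  · exact ⟨c, x, rfl⟩
  · exact ⟨t, y, hy⟩

theorem IsPostCritical.isPostCriticalWord_lsuffix {p : ℕ → X} (hp : A.IsPostCritical p) (n : ℕ) :
    A.IsPostCriticalWord (lsuffix p n) :=
  ⟨p, hp, by rw [length_lsuffix]⟩

theorem isPostCriticalWord_of_not_isTrivialState_sec
    (hpred : ∀ s, ∃ t x, (A.step t x).2 = s) {s : S} {w : List X}
    (h : ¬A.IsTrivialState (A.sec s w)) :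
    A.IsPostCriticalWord w ∧ A.IsPostCriticalWord (A.act s w) := by
  obtain ⟨σ, inp, out, hpath, rfl⟩ := exists_isLeftPath hpred s
  obtain ⟨σ', inp', out', hpath', hend, hinp, hout⟩ := hpath.exists_extend w
  rw [← hend] at h
  have hinp_pc : A.IsPostCritical inp' := ⟨σ', inp', out', hpath', h, Or.inl rfl⟩
  have hout_pc : A.IsPostCritical out' := ⟨σ', inp', out', hpath', h, Or.inr rfl⟩
  exact ⟨hinp ▸ hinp_pc.isPostCriticalWord_lsuffix _, hout ▸ hout_pc.isPostCriticalWord_lsuffix _⟩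

theorem ERel.exists_eq_append (hpred : ∀ s, ∃ t x, (A.step t x).2 = s) {w u b : List X}
    (hw : ¬A.IsPostCriticalWord w) (h : A.ERel (w ++ u) b) :
    ∃ w', A.ERel w w' ∧ b = w' ++ u := by
  obtain ⟨s, ⟨-, rfl⟩ | ⟨-, hact⟩⟩ := h
  · have hs : A.IsTrivialState (A.sec s w) := by
      by_contra hs
      exact hw (isPostCriticalWord_of_not_isTrivialState_sec hpred hs).1
    exact ⟨A.act s w, eRel_act hs, hs.act_append u⟩
  · obtain ⟨w', u', rfl, rfl, rfl⟩ := act_eq_append_iff.1 hact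
    have hs : A.IsTrivialState (A.sec s w') := by
      by_contra hs
      exact hw (isPostCriticalWord_of_not_isTrivialState_sec hpred hs).2
    exact ⟨w', (eRel_act hs).symm, by rw [hs u']⟩

theorem EEquiv.exists_eq_append (hpred : ∀ s, ∃ t x, (A.step t x).2 = s) {v u b : List X}
    (hv : ∀ w ∈ A.eOrbit v, ¬A.IsPostCriticalWord w) (h : A.EEquiv (v ++ u) b) :
    ∃ w ∈ A.eOrbit v, w ++ u = b := by
  rw [eEquiv_eq_reflTransGen] at h
  induction h with
  | refl => exact ⟨v, .refl v, rfl⟩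
  | tail _ hstep ih =>
    obtain ⟨w, hw, rfl⟩ := ih
    obtain ⟨w', hww', rfl⟩ := hstep.exists_eq_append hpred (hv w hw)
    exact ⟨w', .trans _ _ _ hw (.rel _ _ hww'), rfl⟩

end PostCritical

end Mealy

theorem eOrbit_append_of_no_postCritical_general {S X : Type*} (A : Mealy S X)
    (hpred : ∀ s, ∃ t x, (A.step t x).2 = s)
    (v : List X) (hv : ∀ w ∈ A.eOrbit v, ¬A.IsPostCriticalWord w) (u : List X) :
    A.eOrbit (v ++ u) = (fun w => w ++ u) '' A.eOrbit v := by
  ext b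
  constructor
  · exact Mealy.EEquiv.exists_eq_append hpred hv
  · rintro ⟨w, hw, rfl⟩
    exact Mealy.EEquiv.append hw u

/-- If no word in `O^e(v)` is post-critical then
`O^e(vu) = O^e(v)u` for every word `u`. -/
theorem eOrbit_append_of_no_postCritical {S X : Type*} [Fintype S] [Fintype X]
    (hX : 2 ≤ Fintype.card X) (A : Mealy S X) (hInv : A.Invertible)
    (hBdd : A.Bounded) (hCA : ∀ s : S, s ∈ A.circuitStates)
    (v : List X) (hv : ∀ w ∈ A.eOrbit v, ¬A.IsPostCriticalWord w) :
    ∀ u : List X, A.eOrbit (v ++ u) = (fun w => w ++ u) '' A.eOrbit v := by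
  exact eOrbit_append_of_no_postCritical_general A
    (fun s => Mealy.exists_step_eq_of_mem_circuitStates (hCA s)) v hv
end
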